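/- (Performance difference lemma for robust value functions.) In an S×A-rectangular RMDP, let π* and π be Markov policies, and suppose that for each (s,a,h) there exists P†_h(·|s,a) ∈ 𝒫(s,a;P_h) attaining inf_{P ∈ 𝒫(s,a;P_h)} E_P[V^{π*}_{h+1}]. Fix s ∈ S and define occupancy distributions ν_1 := δ_s and ν_{h+1}(s') := ∑_{s''∈S} ν_h(s'')·∑_{a∈A} π*_h(a|s'')·P†_h(s'|s'',a) for h = 1,…,H−1. Then V^{π*}_1(s) − V^π_1(s) ≥ ∑_{h=1}^H ∑_{s_h∈S} ν_h(s_h) · ∑_{a∈A} (π*_h(a|s_h) − π_h(a|s_h)) · Q^π_h(s_h, a). -/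

import Mathlib

/-!
Write `V*`, `V` for the robust values of `πstar`, `π`, and `Q` for the robust state-action value
of `π`. The proof rests on three one-step Bellman inequalities, valid for `1 ≤ h ≤ H`:

* `V*_h ≥ ∑_a π*_h (R_h + E_{P†_h}[V*_{h+1}])` (`robV_ge_bellman`), as `P†` minimises `E[V*_{h+1}]`;
* `V_h ≤ ∑_a π_h Q_h` (`robV_le_sum_robQ`);
* `Q_h ≤ R_h + E_{P†_h}[V_{h+1}]` (`robQ_le_bellman`), as `P†_h` lies in the robust set.

The last two need kernels that are nearly optimal at all states simultaneously
(`exists_near_optimal`). By rectangularity these are built backwards in `h`: the value from step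
`h + 1` on does not depend on the kernels at step `h`, so the latter can be chosen freely for each
state-action pair. No attainment of infima is required for `π`.

Together they give `D_h ≥ g_h + ∑_a π*_h E_{P†_h}[D_{h+1}]` for `D = V* - V` and
`g_h = ∑_a (π*_h - π_h) Q_h`. Integrating against the occupancy distributions `ν_h` telescopes,
and `D_{H+1} = 0`.
-/

open Finset

section RMDPDefs

variable {S A : Type*} [Fintype S] [Fintype A]

/-- `p` is a probability distribution on the finite set `S`. -/
def IsDist (p : S → ℝ) : Prop := (∀ s, 0 ≤ p s) ∧ ∑ s, p s = 1

/-- Expectation of `f` under `p`. -/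
def Eexp (p f : S → ℝ) : ℝ := ∑ s, p s * f s

/-- Total-variation distance between `p` and `q` (no absolute continuity assumed). -/
noncomputable def TV (p q : S → ℝ) : ℝ := (∑ s, |p s - q s|) / 2

/-- Value function `V^{π,P̃}_h` of a Markov policy `π` under the kernel collection `Pk`,
defined by the backward recursion `V_{H+1} ≡ 0`,
`V_h(s) = ∑_a π_h(a|s) (R_h(s,a) + E_{P̃_h(·|s,a)}[V_{h+1}])`. -/
noncomputable def kerV (H : ℕ) (R : ℕ → S → A → ℝ) (Pk : ℕ → S → A → S → ℝ)
    (π : ℕ → S → A → ℝ) (h : ℕ) : S → ℝ := fun s =>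
  if _hle : H + 1 ≤ h then 0
  else ∑ a : A, π h s a * (R h s a + Eexp (Pk h s a) (kerV H R Pk π (h + 1)))
termination_by H + 1 - h
decreasing_by omega

/-- State-action value function `Q^{π,P̃}_h` of `π` under the kernel collection `Pk`. -/
noncomputable def kerQ (H : ℕ) (R : ℕ → S → A → ℝ) (Pk : ℕ → S → A → S → ℝ)
    (π : ℕ → S → A → ℝ) (h : ℕ) (s : S) (a : A) : ℝ :=
  R h s a + Eexp (Pk h s a) (kerV H R Pk π (h + 1))

/-- A kernel collection is admissible if each of its kernels lies in the corresponding
robust set (S×A-rectangularity). -/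
def Admissible (H : ℕ) (Rob : ℕ → S → A → Set (S → ℝ))
    (Pk : ℕ → S → A → S → ℝ) : Prop :=
  ∀ h s a, 1 ≤ h → h ≤ H → Pk h s a ∈ Rob h s a

/-- Robust value function `V^π_h(s)`: infimum over admissible kernel collections. -/
noncomputable def robV (H : ℕ) (R : ℕ → S → A → ℝ) (Rob : ℕ → S → A → Set (S → ℝ))
    (π : ℕ → S → A → ℝ) (h : ℕ) (s : S) : ℝ :=
  sInf {x : ℝ | ∃ Pk : ℕ → S → A → S → ℝ, Admissible H Rob Pk ∧ x = kerV H R Pk π h s}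

/-- Robust state-action value function `Q^π_h(s,a)`. -/
noncomputable def robQ (H : ℕ) (R : ℕ → S → A → ℝ) (Rob : ℕ → S → A → Set (S → ℝ))
    (π : ℕ → S → A → ℝ) (h : ℕ) (s : S) (a : A) : ℝ :=
  sInf {x : ℝ | ∃ Pk : ℕ → S → A → S → ℝ, Admissible H Rob Pk ∧ x = kerQ H R Pk π h s a}

/-- `π` is a Markov policy for horizon `H`. -/
def IsPolicy (H : ℕ) (π : ℕ → S → A → ℝ) : Prop :=
  ∀ h s, 1 ≤ h → h ≤ H → IsDist (π h s)

/-- Optimal robust value function `V*_h(s) = sup_π V^π_h(s)`. -/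
noncomputable def optV (H : ℕ) (R : ℕ → S → A → ℝ) (Rob : ℕ → S → A → Set (S → ℝ))
    (h : ℕ) (s : S) : ℝ :=
  sSup {x : ℝ | ∃ π : ℕ → S → A → ℝ, IsPolicy H π ∧ x = robV H R Rob π h s}

/-- Optimal robust state-action value function `Q*_h(s,a) = sup_π Q^π_h(s,a)`. -/
noncomputable def optQ (H : ℕ) (R : ℕ → S → A → ℝ) (Rob : ℕ → S → A → Set (S → ℝ))
    (h : ℕ) (s : S) (a : A) : ℝ :=
  sSup {x : ℝ | ∃ π : ℕ → S → A → ℝ, IsPolicy H π ∧ x = robQ H R Rob π h s a}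

/-- The total-variation robust sets `𝒫_ρ(s,a;P_h)` of radius `ρ` around the nominal
kernels `P`. -/
def TVset (ρ : ℝ) (P : ℕ → S → A → S → ℝ) : ℕ → S → A → Set (S → ℝ) :=
  fun h s a => {Pt : S → ℝ | IsDist Pt ∧ TV Pt (P h s a) ≤ ρ}

open Classical in
/-- The Markov policy induced by a deterministic policy. -/
noncomputable def detPol (πd : ℕ → S → A) : ℕ → S → A → ℝ :=
  fun h s a => if a = πd h s then 1 else 0

end RMDPDefs

section Bellman

variable {S A : Type*} [Fintype S] [Fintype A]

lemma Eexp_mono {p f g : S → ℝ} (hp : IsDist p) (h : ∀ x, f x ≤ g x) : Eexp p f ≤ Eexp p g :=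
  Finset.sum_le_sum fun x _ => mul_le_mul_of_nonneg_left (h x) (hp.1 x)

lemma Eexp_nonneg {p f : S → ℝ} (hp : IsDist p) (h : ∀ x, 0 ≤ f x) : 0 ≤ Eexp p f :=
  Finset.sum_nonneg fun x _ => mul_nonneg (hp.1 x) (h x)

lemma Eexp_add_const {p f : S → ℝ} (hp : IsDist p) (c : ℝ) :
    Eexp p (fun x => f x + c) = Eexp p f + c := by
  simp only [Eexp, mul_add, Finset.sum_add_distrib, ← Finset.sum_mul, hp.2, one_mul]

lemma kerV_terminal (H : ℕ) (R : ℕ → S → A → ℝ) (Pk : ℕ → S → A → S → ℝ)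
    (π : ℕ → S → A → ℝ) (x : S) : kerV H R Pk π (H + 1) x = 0 := by
  rw [kerV]; simp

lemma kerV_eq_Eexp_kerQ {H : ℕ} (R : ℕ → S → A → ℝ) (Pk : ℕ → S → A → S → ℝ)
    (π : ℕ → S → A → ℝ) {h : ℕ} (hh : h ≤ H) (x : S) :
    kerV H R Pk π h x = Eexp (π h x) (kerQ H R Pk π h x) := by
  rw [kerV, dif_neg (by omega)]; rfl

/-- Values from step `h` on only depend on the kernels from step `h` on. -/
lemma kerV_congr {H : ℕ} {R : ℕ → S → A → ℝ} {Pk Pk' : ℕ → S → A → S → ℝ}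
    {π : ℕ → S → A → ℝ} {h : ℕ} (hle : h ≤ H + 1) (hP : ∀ i, h ≤ i → Pk i = Pk' i) :
    kerV H R Pk π h = kerV H R Pk' π h := by
  induction hle using Nat.decreasingInduction with
  | self => funext x; simp [kerV_terminal]
  | of_succ k hk ih =>
    funext x
    rw [kerV_eq_Eexp_kerQ _ _ _ (by omega), kerV_eq_Eexp_kerQ _ _ _ (by omega)]
    congr 1
    funext a
    simp only [kerQ, ih fun i hi => hP i (by omega), hP k le_rfl]

variable {H : ℕ} {R : ℕ → S → A → ℝ} {Rob : ℕ → S → A → Set (S → ℝ)}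
  {Pk : ℕ → S → A → S → ℝ} {π : ℕ → S → A → ℝ}

lemma kerV_nonneg (hR : ∀ h s a, 1 ≤ h → h ≤ H → 0 ≤ R h s a ∧ R h s a ≤ 1)
    (hD : ∀ h s a, 1 ≤ h → h ≤ H → ∀ p ∈ Rob h s a, IsDist p)
    (hπ : IsPolicy H π) (hPk : Admissible H Rob Pk) {h : ℕ} (hle : h ≤ H + 1) (h1 : 1 ≤ h)
    (x : S) : 0 ≤ kerV H R Pk π h x := by
  induction hle using Nat.decreasingInduction generalizing x with
  | self => simp [kerV_terminal]
  | of_succ k hk ih =>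
    rw [kerV_eq_Eexp_kerQ _ _ _ (by omega)]
    refine Eexp_nonneg (hπ k x h1 (by omega)) fun a => ?_
    exact add_nonneg (hR k x a h1 (by omega)).1
      (Eexp_nonneg (hD k x a h1 (by omega) _ (hPk k x a h1 (by omega))) (ih (by omega)))

lemma robV_le_kerV (hR : ∀ h s a, 1 ≤ h → h ≤ H → 0 ≤ R h s a ∧ R h s a ≤ 1)
    (hD : ∀ h s a, 1 ≤ h → h ≤ H → ∀ p ∈ Rob h s a, IsDist p)
    (hπ : IsPolicy H π) (hPk : Admissible H Rob Pk) {h : ℕ} (hle : h ≤ H + 1) (h1 : 1 ≤ h)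
    (x : S) : robV H R Rob π h x ≤ kerV H R Pk π h x := by
  refine csInf_le ⟨0, ?_⟩ ⟨Pk, hPk, rfl⟩
  rintro _ ⟨P, hP, rfl⟩
  exact kerV_nonneg hR hD hπ hP hle h1 x

lemma robQ_le_kerQ (hR : ∀ h s a, 1 ≤ h → h ≤ H → 0 ≤ R h s a ∧ R h s a ≤ 1)
    (hD : ∀ h s a, 1 ≤ h → h ≤ H → ∀ p ∈ Rob h s a, IsDist p)
    (hπ : IsPolicy H π) (hPk : Admissible H Rob Pk) {h : ℕ} (hle : h ≤ H) (h1 : 1 ≤ h)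
    (x : S) (a : A) : robQ H R Rob π h x a ≤ kerQ H R Pk π h x a := by
  refine csInf_le ⟨0, ?_⟩ ⟨Pk, hPk, rfl⟩
  rintro _ ⟨P, hP, rfl⟩
  exact add_nonneg (hR h x a h1 hle).1 (Eexp_nonneg (hD h x a h1 hle _ (hP h x a h1 hle))
    (kerV_nonneg hR hD hπ hP (by omega) (by omega)))

lemma robV_terminal (hA : ∃ P, Admissible H Rob P) (x : S) :
    robV H R Rob π (H + 1) x = 0 := by
  have : {y : ℝ | ∃ Pk : ℕ → S → A → S → ℝ, Admissible H Rob Pk ∧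
      y = kerV H R Pk π (H + 1) x} = {0} := by
    ext y
    simp only [kerV_terminal, Set.mem_ofPred_eq, Set.mem_singleton_iff]
    exact ⟨fun ⟨_, _, h⟩ => h, fun h => ⟨hA.choose, hA.choose_spec, h⟩⟩
  rw [robV, this, csInf_singleton]

lemma sum_robQ_le_robV (hR : ∀ h s a, 1 ≤ h → h ≤ H → 0 ≤ R h s a ∧ R h s a ≤ 1)
    (hD : ∀ h s a, 1 ≤ h → h ≤ H → ∀ p ∈ Rob h s a, IsDist p)
    (hπ : IsPolicy H π) (hA : ∃ P, Admissible H Rob P) {h : ℕ} (hle : h ≤ H) (h1 : 1 ≤ h)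
    (x : S) : Eexp (π h x) (robQ H R Rob π h x) ≤ robV H R Rob π h x := by
  obtain ⟨P₀, hP₀⟩ := hA
  refine le_csInf ⟨_, P₀, hP₀, rfl⟩ ?_
  rintro _ ⟨P, hP, rfl⟩
  rw [kerV_eq_Eexp_kerQ _ _ _ hle]
  exact Eexp_mono (hπ h x h1 hle) (robQ_le_kerQ hR hD hπ hP hle h1 x)

/-- Backward step in the construction of near-optimal kernels: kernels near-optimal from step
`h + 1` on can be modified at step `h` so as to be near-optimal for all `Q_h(x, a)` at once. -/
lemma exists_near_optimal_step (hR : ∀ h s a, 1 ≤ h → h ≤ H → 0 ≤ R h s a ∧ R h s a ≤ 1)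
    (hD : ∀ h s a, 1 ≤ h → h ≤ H → ∀ p ∈ Rob h s a, IsDist p)
    (hπ : IsPolicy H π) (hA : ∃ P, Admissible H Rob P) {h : ℕ} (hle : h ≤ H) (h1 : 1 ≤ h)
    (hnext : ∀ ε > 0, ∃ P, Admissible H Rob P ∧
      ∀ x, kerV H R P π (h + 1) x ≤ robV H R Rob π (h + 1) x + ε) (ε : ℝ) (hε : 0 < ε) :
    ∃ P, Admissible H Rob P ∧
      ∀ x, kerV H R P π h x ≤ Eexp (π h x) (robQ H R Rob π h x) + ε := by
  obtain ⟨P₀, hP₀⟩ := hA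
  obtain ⟨P, hP, hPV⟩ := hnext (ε / 2) (by linarith)
  have hex : ∀ x a, ∃ p ∈ Rob h x a,
      R h x a + Eexp p (robV H R Rob π (h + 1)) ≤ robQ H R Rob π h x a + ε / 2 := by
    intro x a
    obtain ⟨_, ⟨P', hP', rfl⟩, hlt⟩ := exists_lt_of_csInf_lt
      (s := {y : ℝ | ∃ Pk : ℕ → S → A → S → ℝ, Admissible H Rob Pk ∧ y = kerQ H R Pk π h x a})
      ⟨_, P₀, hP₀, rfl⟩
      (show _ < robQ H R Rob π h x a + ε / 2 from lt_add_of_pos_right _ (by linarith))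
    refine ⟨P' h x a, hP' h x a h1 hle, le_trans ?_ hlt.le⟩
    have := Eexp_mono (hD h x a h1 hle _ (hP' h x a h1 hle))
      (robV_le_kerV (R := R) hR hD hπ hP' (h := h + 1) (by omega) (by omega))
    simpa [kerQ] using this
  choose q hq hqV using hex
  refine ⟨Function.update P h q, ?_, fun x => ?_⟩
  · intro i y a hi1 hi
    by_cases hih : i = h
    · subst hih; simpa using hq y a
    · simpa [Function.update_of_ne hih] using hP i y a hi1 hi
  · rw [kerV_eq_Eexp_kerQ _ _ _ hle, ← Eexp_add_const (hπ h x h1 hle)]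
    refine Eexp_mono (hπ h x h1 hle) fun a => ?_
    have hc : kerV H R (Function.update P h q) π (h + 1) = kerV H R P π (h + 1) :=
      kerV_congr (by omega) fun i hi => Function.update_of_ne (by omega) _ _
    have hd := hD h x a h1 hle _ (hq x a)
    have h2 := Eexp_mono hd hPV
    rw [Eexp_add_const hd] at h2
    have h3 := hqV x a
    simp only [kerQ, hc, Function.update_self]
    linarith

/-- Some admissible kernels are near-optimal for `V_h` at all states simultaneously. -/
lemma exists_near_optimal (hR : ∀ h s a, 1 ≤ h → h ≤ H → 0 ≤ R h s a ∧ R h s a ≤ 1)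
    (hD : ∀ h s a, 1 ≤ h → h ≤ H → ∀ p ∈ Rob h s a, IsDist p)
    (hπ : IsPolicy H π) (hA : ∃ P, Admissible H Rob P) {h : ℕ} (hle : h ≤ H + 1) (h1 : 1 ≤ h)
    (ε : ℝ) (hε : 0 < ε) :
    ∃ P, Admissible H Rob P ∧ ∀ x, kerV H R P π h x ≤ robV H R Rob π h x + ε := by
  induction hle using Nat.decreasingInduction generalizing ε with
  | self =>
    obtain ⟨P, hP⟩ := hA
    exact ⟨P, hP, fun x => by rw [kerV_terminal, robV_terminal ⟨P, hP⟩]; linarith⟩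
  | of_succ k hk ih =>
    obtain ⟨P, hP, hPV⟩ := exists_near_optimal_step hR hD hπ hA (by omega) h1
      (fun ε hε => ih (by omega) ε hε) ε hε
    exact ⟨P, hP, fun x => (hPV x).trans
      (by linarith [sum_robQ_le_robV (R := R) hR hD hπ hA (h := k) (by omega) h1 x])⟩

lemma robV_le_sum_robQ (hR : ∀ h s a, 1 ≤ h → h ≤ H → 0 ≤ R h s a ∧ R h s a ≤ 1)
    (hD : ∀ h s a, 1 ≤ h → h ≤ H → ∀ p ∈ Rob h s a, IsDist p)
    (hπ : IsPolicy H π) (hA : ∃ P, Admissible H Rob P) {h : ℕ} (hle : h ≤ H) (h1 : 1 ≤ h)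
    (x : S) : robV H R Rob π h x ≤ Eexp (π h x) (robQ H R Rob π h x) := by
  refine le_of_forall_pos_le_add fun ε hε => ?_
  obtain ⟨P, hP, hPV⟩ := exists_near_optimal_step hR hD hπ hA hle h1
    (exists_near_optimal hR hD hπ hA (by omega) (by omega)) ε hε
  exact (robV_le_kerV hR hD hπ hP (by omega) h1 x).trans (hPV x)

lemma robQ_le_bellman (hR : ∀ h s a, 1 ≤ h → h ≤ H → 0 ≤ R h s a ∧ R h s a ≤ 1)
    (hD : ∀ h s a, 1 ≤ h → h ≤ H → ∀ p ∈ Rob h s a, IsDist p)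
    (hπ : IsPolicy H π) (hPk : Admissible H Rob Pk) {h : ℕ} (hle : h ≤ H) (h1 : 1 ≤ h)
    (x : S) (a : A) :
    robQ H R Rob π h x a ≤ R h x a + Eexp (Pk h x a) (robV H R Rob π (h + 1)) := by
  refine le_of_forall_pos_le_add fun ε hε => ?_
  obtain ⟨P, hP, hPV⟩ := exists_near_optimal (R := R) (h := h + 1) hR hD hπ ⟨Pk, hPk⟩
    (by omega) (by omega) ε hε
  have hadm : Admissible H Rob (Function.update P h (Pk h)) := by
    intro i y b hi1 hi
    by_cases hih : i = h
    · subst hih; simpa using hPk i y b hi1 hi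
    · simpa [Function.update_of_ne hih] using hP i y b hi1 hi
  have hc : kerV H R (Function.update P h (Pk h)) π (h + 1) = kerV H R P π (h + 1) :=
    kerV_congr (by omega) fun i hi => Function.update_of_ne (by omega) _ _
  have hd := hD h x a h1 hle _ (hPk h x a h1 hle)
  have h2 := Eexp_mono hd hPV
  rw [Eexp_add_const hd] at h2
  have h3 := robQ_le_kerQ hR hD hπ hadm hle h1 x a
  simp only [kerQ, hc, Function.update_self] at h3
  linarith

lemma robV_ge_bellman (hR : ∀ h s a, 1 ≤ h → h ≤ H → 0 ≤ R h s a ∧ R h s a ≤ 1)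
    (hD : ∀ h s a, 1 ≤ h → h ≤ H → ∀ p ∈ Rob h s a, IsDist p)
    (hπ : IsPolicy H π) (hPk : Admissible H Rob Pk)
    (hInf : ∀ h s a, 1 ≤ h → h ≤ H → Eexp (Pk h s a) (robV H R Rob π (h + 1))
        = sInf {x : ℝ | ∃ Pt ∈ Rob h s a, x = Eexp Pt (robV H R Rob π (h + 1))})
    {h : ℕ} (hle : h ≤ H) (h1 : 1 ≤ h) (x : S) :
    Eexp (π h x) (fun a => R h x a + Eexp (Pk h x a) (robV H R Rob π (h + 1)))
      ≤ robV H R Rob π h x := by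
  refine le_csInf ⟨_, Pk, hPk, rfl⟩ ?_
  rintro _ ⟨P, hP, rfl⟩
  rw [kerV_eq_Eexp_kerQ _ _ _ hle]
  refine Eexp_mono (hπ h x h1 hle) fun a => ?_
  have hV0 : ∀ y, 0 ≤ robV H R Rob π (h + 1) y := fun y =>
    Real.sInf_nonneg (by
      rintro _ ⟨P', hP', rfl⟩
      exact kerV_nonneg hR hD hπ hP' (by omega) (by omega) y)
  have hmin : Eexp (Pk h x a) (robV H R Rob π (h + 1))
      ≤ Eexp (P h x a) (robV H R Rob π (h + 1)) := by
    rw [hInf h x a h1 hle]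
    refine csInf_le ⟨0, ?_⟩ ⟨_, hP h x a h1 hle, rfl⟩
    rintro _ ⟨p, hp, rfl⟩
    exact Eexp_nonneg (hD h x a h1 hle p hp) hV0
  have := Eexp_mono (hD h x a h1 hle _ (hP h x a h1 hle))
    (robV_le_kerV (R := R) hR hD hπ hP (h := h + 1) (by omega) (by omega))
  simp only [kerQ]
  linarith

end Bellman

open Classical in
/-- **Performance difference lemma for robust value functions.** In an S×A-rectangular RMDP,
if `P†` attains the robust infimum for `V^{π*}_{h+1}` at every `(s,a,h)`, and `ν` is the
occupancy sequence of `π*` under `P†` started at `s`, then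
`V^{π*}_1(s) - V^π_1(s) ≥ ∑_{h=1}^H ∑_{s_h} ν_h(s_h) ∑_a (π*_h(a|s_h) - π_h(a|s_h))·Q^π_h(s_h,a)`. -/
theorem robust_performance_difference {S A : Type*} [Fintype S] [Fintype A]
    [Nonempty S] [Nonempty A]
    (H : ℕ) (hH : 1 ≤ H)
    (R : ℕ → S → A → ℝ) (hR : ∀ h s a, 1 ≤ h → h ≤ H → 0 ≤ R h s a ∧ R h s a ≤ 1)
    (Rob : ℕ → S → A → Set (S → ℝ))
    (hRobNE : ∀ h s a, 1 ≤ h → h ≤ H → (Rob h s a).Nonempty)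
    (hRobDist : ∀ h s a, 1 ≤ h → h ≤ H → ∀ p ∈ Rob h s a, IsDist p)
    (πstar π : ℕ → S → A → ℝ) (hπstar : IsPolicy H πstar) (hπ : IsPolicy H π)
    (Pdag : ℕ → S → A → S → ℝ)
    (hPdagMem : ∀ h s a, 1 ≤ h → h ≤ H → Pdag h s a ∈ Rob h s a)
    (hPdagInf : ∀ h s a, 1 ≤ h → h ≤ H →
      Eexp (Pdag h s a) (robV H R Rob πstar (h + 1))
        = sInf {x : ℝ | ∃ Pt ∈ Rob h s a, x = Eexp Pt (robV H R Rob πstar (h + 1))})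
    (s : S) (ν : ℕ → S → ℝ)
    (hν1 : ∀ s', ν 1 s' = if s' = s then 1 else 0)
    (hνrec : ∀ h, 1 ≤ h → h + 1 ≤ H → ∀ s',
      ν (h + 1) s' = ∑ s'' : S, ν h s'' * ∑ a : A, πstar h s'' a * Pdag h s'' a s') :
    robV H R Rob πstar 1 s - robV H R Rob π 1 s
      ≥ ∑ h ∈ Finset.Icc 1 H, ∑ sh : S, ν h sh *
          ∑ a : A, (πstar h sh a - π h sh a) * robQ H R Rob π h sh a := by
  have hA : Admissible H Rob Pdag := hPdagMem
  set D : ℕ → S → ℝ := fun h x => robV H R Rob πstar h x - robV H R Rob π h x with hDdef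
  set g : ℕ → S → ℝ := fun h x =>
    ∑ a : A, (πstar h x a - π h x a) * robQ H R Rob π h x a with hg
  -- Expected gap at step `h + 1` when `πstar` and `Pdag` act at step `h` from state `x`.
  set T : ℕ → S → ℝ := fun h x => ∑ a : A, πstar h x a * Eexp (Pdag h x a) (D (h + 1)) with hT
  have hstep : ∀ h x, 1 ≤ h → h ≤ H → g h x + T h x ≤ D h x := by
    intro h x h1 hle
    have e1 := robV_ge_bellman hR hRobDist hπstar hA hPdagInf hle h1 x
    have e2 := robV_le_sum_robQ hR hRobDist hπ ⟨_, hA⟩ hle h1 x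
    have e3 := Eexp_mono (hπstar h x h1 hle) (robQ_le_bellman hR hRobDist hπ hA hle h1 x)
    have e4 : g h x = Eexp (πstar h x) (robQ H R Rob π h x)
        - Eexp (π h x) (robQ H R Rob π h x) := by
      simp only [hg, Eexp, sub_mul, Finset.sum_sub_distrib]
    have e5 : T h x = Eexp (πstar h x)
          (fun a => R h x a + Eexp (Pdag h x a) (robV H R Rob πstar (h + 1)))
        - Eexp (πstar h x)
          (fun a => R h x a + Eexp (Pdag h x a) (robV H R Rob π (h + 1))) := by
      simp only [hT, hDdef, Eexp, ← Finset.sum_sub_distrib, ← mul_sub, add_sub_add_left_eq_sub]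
    simp only [hDdef]
    linarith
  have hν0 : ∀ h, 1 ≤ h → h ≤ H → ∀ x, 0 ≤ ν h x := by
    intro h h1
    induction h, h1 using Nat.le_induction with
    | base => intro _ x; rw [hν1]; split_ifs <;> norm_num
    | succ n hn ih =>
      intro hle x
      rw [hνrec n hn hle]
      refine Finset.sum_nonneg fun y _ => mul_nonneg (ih (by omega) y)
        (Finset.sum_nonneg fun a _ => mul_nonneg ((hπstar n y hn (by omega)).1 a) ?_)
      exact (hRobDist n y a hn (by omega) _ (hPdagMem n y a hn (by omega))).1 x
  have hpush : ∀ h, 1 ≤ h → h + 1 ≤ H →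
      ∑ x, ν (h + 1) x * D (h + 1) x = ∑ x, ν h x * T h x := by
    intro h h1 hle
    simp only [hνrec h h1 hle, hT, Eexp, Finset.sum_mul, Finset.mul_sum]
    rw [Finset.sum_comm]
    refine Finset.sum_congr rfl fun y _ => ?_
    rw [Finset.sum_comm]
    exact Finset.sum_congr rfl fun a _ => Finset.sum_congr rfl fun x _ => by ring
  have hint : ∀ h, 1 ≤ h → h ≤ H →
      ∑ x, ν h x * g h x + ∑ x, ν h x * T h x ≤ ∑ x, ν h x * D h x := by
    intro h h1 hle
    rw [← Finset.sum_add_distrib]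
    refine Finset.sum_le_sum fun x _ => ?_
    rw [← mul_add]
    exact mul_le_mul_of_nonneg_left (hstep h x h1 hle) (hν0 h h1 hle x)
  have htel : ∀ n, 1 ≤ n → n ≤ H →
      ∑ h ∈ Finset.Icc 1 n, ∑ x, ν h x * g h x + ∑ x, ν n x * T n x ≤ D 1 s := by
    intro n hn
    induction n, hn using Nat.le_induction with
    | base =>
      intro hle
      have := hint 1 le_rfl hle
      have e : ∑ x, ν 1 x * D 1 x = D 1 s := by simp [hν1]
      simpa [e] using this
    | succ n hn ih =>
      intro hle
      rw [Finset.sum_Icc_succ_top (by omega)]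
      have := hint (n + 1) (by omega) hle
      rw [hpush n hn hle] at this
      linarith [ih (by omega)]
  have hend : ∑ x, ν H x * T H x = 0 := by
    simp [hT, hDdef, Eexp, robV_terminal ⟨_, hA⟩]
  have := htel H hH le_rfl
  rw [hend, add_zero] at this
  exact this
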